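/- Let (Q, 𝔖) be a hierarchically hyperbolic group with ⊑-maximal element S, and let X be a generating set of Q such that CS = Cay(Q, X) (with π_S the inclusion). Let H be a finitely generated group with finite generating set Y, and let φ : H → Q be a group homomorphism which is a quasi-isometric embedding with respect to the word metrics d_Y and d_X. Then there exists a constant C such that for every g ∈ Q and every U ∈ 𝔖 − {S}, the diameter of π_U(g·φ(H)) in CU is at most C. -/

import Mathlib

noncomputable section
open scoped Classical

/-! ### Basic coarse-geometric vocabulary -/

/-- The distance function of an explicitly given pseudometric structure. -/
def mdist {α : Type*} (m : PseudoMetricSpace α) (x y : α) : ℝ := @dist α m.toDist x y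

/-- Four-point (Gromov) hyperbolicity condition for a distance function. -/
def IsHypDist {α : Type*} (d : α → α → ℝ) (δ : ℝ) : Prop :=
  ∀ x y z w : α, d x y + d z w ≤ max (d x z + d y w) (d x w + d y z) + 2 * δ

/-- A discrete geodesic chain of length `n` for the distance function `d`. -/
def IsGeodChain {α : Type*} (d : α → α → ℝ) (n : ℕ) (p : ℕ → α) : Prop :=
  ∀ i ≤ n, ∀ j ≤ n, d (p i) (p j) = |(i : ℝ) - (j : ℝ)|

/-- `A` is `q`-quasi-convex for `d`: every (discrete) geodesic between points of `A`
stays within distance `q` of `A`. -/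
def QConv {α : Type*} (d : α → α → ℝ) (A : Set α) (q : ℝ) : Prop :=
  ∀ (n : ℕ) (p : ℕ → α), IsGeodChain d n p → p 0 ∈ A → p n ∈ A →
    ∀ i ≤ n, ∃ a ∈ A, d (p i) a ≤ q

/-- Hausdorff-distance bound for the distance function `d`. -/
def hdLE {α : Type*} (d : α → α → ℝ) (A B : Set α) (r : ℝ) : Prop :=
  (∀ a ∈ A, ∃ b ∈ B, d a b ≤ r) ∧ ∀ b ∈ B, ∃ a ∈ A, d a b ≤ r

/-- Finite Hausdorff distance. -/
def FinHD {α : Type*} (d : α → α → ℝ) (A B : Set α) : Prop := ∃ r : ℝ, hdLE d A B r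

/-! ### Word metrics -/

/-- The set of lengths of words in `A ∪ A⁻¹` representing `g`. -/
def relWords {G : Type*} [Group G] (A : Set G) (g : G) : Set ℕ :=
  {n | ∃ l : List G, l.length = n ∧ (∀ a ∈ l, a ∈ A ∨ a⁻¹ ∈ A) ∧ l.prod = g}

/-- `A` generates `G`. -/
def Generates {G : Type*} [Group G] (A : Set G) : Prop := ∀ g : G, (relWords A g).Nonempty

/-- The word metric on `G` associated with the (possibly infinite) set `A`. -/
def wdist {G : Type*} [Group G] (A : Set G) (x y : G) : ℝ :=
  ((sInf (relWords A (x⁻¹ * y)) : ℕ) : ℝ)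

/-- `G` is a (word-)hyperbolic group. -/
def IsHypGroup (G : Type*) [Group G] : Prop :=
  ∃ S : Finset G, Generates (S : Set G) ∧ ∃ δ ≥ (0:ℝ), IsHypDist (wdist (S : Set G)) δ

/-- Lengths of paths from `x` to `y` in the Cayley graph of the generating set `A`
avoiding edges whose two endpoints both lie in `K`. -/
def relPathLens {G : Type*} [Group G] (A K : Set G) (x y : G) : Set ℕ :=
  {n | ∃ p : List G, p.length = n + 1 ∧ p.head? = some x ∧ p.getLast? = some y ∧
        p.Chain' (fun u v => (u⁻¹ * v ∈ A ∨ v⁻¹ * u ∈ A) ∧ ¬(u ∈ K ∧ v ∈ K))}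

/-- The relative metric of Dahmani--Guirardel--Osin: the length of a shortest path
avoiding the edges of the complete subgraph on `K`. -/
def relDist {G : Type*} [Group G] (A K : Set G) (x y : G) : ℕ∞ :=
  sInf ((fun n : ℕ => (n : ℕ∞)) '' relPathLens A K x y)

/-- A family of subgroups `H i` is hyperbolically embedded in `G` with respect to `T`
(Dahmani--Guirardel--Osin): `Cay(G, T ⊔ ⊔ᵢ Hᵢ)` is hyperbolic and each relative
metric is proper. -/
structure HypEmbFamily (G : Type*) [Group G] {I : Type*} (H : I → Subgroup G)
    (T : Set G) : Prop where
  symm : ∀ t ∈ T, t⁻¹ ∈ T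
  gens : Generates (T ∪ ⋃ i, (H i : Set G))
  hyp : ∃ δ ≥ (0:ℝ), IsHypDist (wdist (T ∪ ⋃ i, (H i : Set G))) δ
  proper : ∀ i, ∀ h ∈ H i, ∀ n : ℕ,
      {h' : G | h' ∈ H i ∧
        relDist (T ∪ ⋃ j, (H j : Set G)) (H i : Set G) h h' ≤ (n : ℕ∞)}.Finite

/-! ### Hierarchically hyperbolic spaces -/

/-- A hierarchically hyperbolic space structure on the set `X` (Behrstock--Hagen--Sisto).
Coarse projections and relative projections are realized as coarse points. -/
structure HHSStruct (X : Type*) where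
  /-- The (quasigeodesic) metric on `X`. -/
  metX : PseudoMetricSpace X
  /-- The index set of domains. -/
  S : Type
  /-- The hyperbolic space attached to each domain. -/
  C : S → Type
  /-- The metric of each attached space. -/
  met : ∀ U, PseudoMetricSpace (C U)
  /-- `X` is a quasigeodesic space. -/
  quasigeodesic : ∃ q ≥ (1:ℝ), ∀ x y : X, ∃ f : ℝ → X,
    f 0 = x ∧ f (mdist metX x y) = y ∧
    ∀ s ∈ Set.Icc (0:ℝ) (mdist metX x y), ∀ t ∈ Set.Icc (0:ℝ) (mdist metX x y),
      (|s - t| - q) / q ≤ mdist metX (f s) (f t) ∧ mdist metX (f s) (f t) ≤ q * |s - t| + q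
  /-- The attached spaces are uniformly hyperbolic. -/
  hyperbolic : ∃ δ ≥ (0:ℝ), ∀ U, IsHypDist (mdist (met U)) δ
  /-- Projections. -/
  π : ∀ U, X → C U
  /-- Projections are uniformly coarsely Lipschitz. -/
  proj_lip : ∃ K ≥ (0:ℝ), ∀ U (x y : X),
    mdist (met U) (π U x) (π U y) ≤ K * mdist metX x y + K
  /-- Nesting. -/
  nest : S → S → Prop
  nest_refl : ∀ U, nest U U
  nest_antisymm : ∀ U V, nest U V → nest V U → U = V
  nest_trans : ∀ U V W, nest U V → nest V W → nest U W
  /-- The unique maximal element. -/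
  maxS : S
  nest_max : ∀ U, nest U maxS
  /-- Orthogonality. -/
  orth : S → S → Prop
  orth_symm : ∀ U V, orth U V → orth V U
  orth_irrefl : ∀ U, ¬ orth U U
  orth_nest : ∀ U V W, nest U V → orth V W → orth U W
  orth_not_nest : ∀ U V, orth U V → ¬ nest U V
  /-- Containers for orthogonal complements. -/
  container : ∀ T U, nest U T → (∃ V, nest V T ∧ orth V U) →
      ∃ W, nest W T ∧ W ≠ T ∧ ∀ V, nest V T → orth V U → nest V W
  /-- Relative projection `ρ^U_V` (meaningful when `U` is properly nested in `V`, or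
  `U` and `V` are transverse). -/
  ρ : S → ∀ V : S, C V
  /-- Downward relative projection `ρ^W_V : C W → C V` for `V` nested in `W`. -/
  ρdown : ∀ W V : S, C W → C V
  /-- Consistency (Behrstock) inequalities and `ρ`-compatibility. -/
  consistency : ∃ κ ≥ (0:ℝ),
    (∀ U V (x : X), ¬ orth U V → ¬ nest U V → ¬ nest V U →
       min (mdist (met V) (π V x) (ρ U V)) (mdist (met U) (π U x) (ρ V U)) ≤ κ) ∧
    (∀ U V (x : X), nest V U → V ≠ U →
       min (mdist (met U) (π U x) (ρ V U))
           (mdist (met V) (π V x) (ρdown U V (π U x))) ≤ κ) ∧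
    (∀ U V W, nest U V →
       ((nest V W ∧ V ≠ W) ∨ ((¬ orth V W ∧ ¬ nest V W ∧ ¬ nest W V) ∧ ¬ orth W U)) →
       mdist (met W) (ρ U W) (ρ V W) ≤ κ)
  /-- Finite complexity. -/
  complexity : ∃ n : ℕ, ∀ l : List S, l.Chain' (fun U V => nest U V ∧ U ≠ V) → l.length ≤ n
  /-- Large links. -/
  large_links : ∃ lam ≥ (1:ℝ), ∃ E ≥ (0:ℝ), ∀ W (x x' : X),
    ∃ Ts : Finset S, (Ts.card : ℝ) ≤ lam * mdist (met W) (π W x) (π W x') + lam ∧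
      (∀ Ti ∈ Ts, (nest Ti W ∧ Ti ≠ W) ∧
        mdist (met W) (π W x) (ρ Ti W) ≤ lam * mdist (met W) (π W x) (π W x') + lam) ∧
      (∀ V, nest V W → V ≠ W →
        (∃ Ti ∈ Ts, nest V Ti) ∨ mdist (met V) (π V x) (π V x') < E)
  /-- Bounded geodesic image. -/
  bgi : ∃ E ≥ (0:ℝ), ∀ W V, nest V W → V ≠ W →
    ∀ (n : ℕ) (p : ℕ → C W), IsGeodChain (mdist (met W)) n p →
      (∀ i ≤ n, ∀ j ≤ n, mdist (met V) (ρdown W V (p i)) (ρdown W V (p j)) ≤ E) ∨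
      ∃ i ≤ n, mdist (met W) (p i) (ρ V W) ≤ E
  /-- Partial realization. -/
  partial_realization : ∃ α ≥ (0:ℝ), ∀ (J : Finset S) (p : ∀ U, C U),
    (∀ U ∈ J, ∀ V ∈ J, U ≠ V → orth U V) →
    ∃ x : X, ∀ U ∈ J, mdist (met U) (π U x) (p U) ≤ α ∧
      (∀ V, nest U V → U ≠ V → mdist (met V) (π V x) (ρ U V) ≤ α) ∧
      (∀ W, ¬ orth U W → ¬ nest U W → ¬ nest W U → mdist (met W) (π W x) (ρ U W) ≤ α)
  /-- Uniqueness. -/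
  uniqueness : ∀ κ ≥ (0:ℝ), ∃ θ ≥ (0:ℝ), ∀ x y : X, mdist metX x y ≥ θ →
    ∃ U, mdist (met U) (π U x) (π U y) ≥ κ

/-- Hierarchical quasi-convexity of a subset `Y` with gauge `k`
(Behrstock--Hagen--Sisto, Definition 5.1). -/
def HierQC {X : Type*} (L : HHSStruct X) (Y : Set X) (k : ℝ → ℝ) : Prop :=
  (∀ U, QConv (mdist (L.met U)) ((L.π U) '' Y) (k 0)) ∧
  (∀ r ≥ (0:ℝ), ∀ x : X, (∀ U, ∃ y ∈ Y, mdist (L.met U) (L.π U x) (L.π U y) ≤ r) →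
    ∃ y ∈ Y, mdist L.metX x y ≤ k r)

/-- An HHS is normalized if all projections are uniformly coarsely onto. -/
def Normalized {X : Type*} (L : HHSStruct X) : Prop :=
  ∃ Cst ≥ (0:ℝ), ∀ U (c : L.C U), ∃ x : X, mdist (L.met U) c (L.π U x) ≤ Cst

/-! ### Hierarchically hyperbolic groups -/

/-- A hierarchically hyperbolic group structure on the group `Q`: an HHS structure on
`Q` with a word metric, with a cofinite action of `Q` by HHS automorphisms. -/
structure HHGStruct (Q : Type*) [Group Q] where
  /-- The underlying hierarchically hyperbolic space structure on `Q`. -/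
  hhs : HHSStruct Q
  /-- The metric is a word metric for a finite generating set. -/
  word : ∃ T : Finset Q, Generates (T : Set Q) ∧
    ∀ x y : Q, mdist hhs.metX x y = wdist (T : Set Q) x y
  /-- The action of `Q` on the index set. -/
  act : Q → hhs.S ≃ hhs.S
  act_one : ∀ U, act 1 U = U
  act_mul : ∀ g h U, act (g * h) U = act g (act h U)
  act_nest : ∀ g U V, hhs.nest U V ↔ hhs.nest (act g U) (act g V)
  act_orth : ∀ g U V, hhs.orth U V ↔ hhs.orth (act g U) (act g V)
  /-- The action on the attached hyperbolic spaces, by isometries. -/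
  actC : ∀ g U, hhs.C U → hhs.C (act g U)
  actC_isom : ∀ g U x y,
    mdist (hhs.met (act g U)) (actC g U x) (actC g U y) = mdist (hhs.met U) x y
  actC_onto : ∀ g U, Function.Surjective (actC g U)
  /-- Uniform coarse equivariance of the projections. -/
  act_proj : ∃ κ ≥ (0:ℝ), ∀ g U (x : Q),
    mdist (hhs.met (act g U)) (hhs.π (act g U) (g * x)) (actC g U (hhs.π U x)) ≤ κ
  /-- Finitely many orbits of domains. -/
  orbits : ∃ F : Finset hhs.S, ∀ U : hhs.S, ∃ g, ∃ V ∈ F, act g V = U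

/-- A homomorphism of hierarchically hyperbolic groups: a group homomorphism which is a
hieromorphism whose constituent maps are uniformly coarsely equivariant. -/
structure HHGHom {A B : Type*} [Group A] [Group B] (SA : HHGStruct A) (SB : HHGStruct B)
    (φ : A →* B) where
  fS : SA.hhs.S → SB.hhs.S
  inj : Function.Injective fS
  nest_iff : ∀ U V, SA.hhs.nest U V ↔ SB.hhs.nest (fS U) (fS V)
  orth_iff : ∀ U V, SA.hhs.orth U V ↔ SB.hhs.orth (fS U) (fS V)
  fC : ∀ U, SA.hhs.C U → SB.hhs.C (fS U)
  /-- The maps on hyperbolic spaces are uniform quasi-isometric embeddings. -/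
  qie : ∃ K ≥ (1:ℝ), ∀ U x y,
    mdist (SA.hhs.met U) x y ≤ K * mdist (SB.hhs.met (fS U)) (fC U x) (fC U y) + K ∧
    mdist (SB.hhs.met (fS U)) (fC U x) (fC U y) ≤ K * mdist (SA.hhs.met U) x y + K
  /-- Coarse commutation with the projections `π`. -/
  comm_π : ∃ κ ≥ (0:ℝ), ∀ U a,
    mdist (SB.hhs.met (fS U)) (SB.hhs.π (fS U) (φ a)) (fC U (SA.hhs.π U a)) ≤ κ
  /-- Coarse commutation with the relative projections `ρ`. -/
  comm_ρ : ∃ κ ≥ (0:ℝ), ∀ U V, U ≠ V → ¬ SA.hhs.orth U V →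
    mdist (SB.hhs.met (fS V)) (SB.hhs.ρ (fS U) (fS V)) (fC V (SA.hhs.ρ U V)) ≤ κ
  /-- Equivariance on index sets. -/
  equiv_S : ∀ g U, fS (SA.act g U) = SB.act (φ g) (fS U)
  /-- Uniform coarse equivariance on the hyperbolic spaces. -/
  equiv_C : ∃ κ ≥ (0:ℝ), ∀ g U x,
    mdist (SB.hhs.met (SB.act (φ g) (fS U)))
      (cast (congrArg SB.hhs.C (equiv_S g U)) (fC (SA.act g U) (SA.actC g U x)))
      (SB.actC (φ g) (fS U) (fC U x)) ≤ κ

/-- Fullness of a homomorphism of HHGs (as a hieromorphism). -/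
structure IsFull {A B : Type*} [Group A] [Group B] {SA : HHGStruct A} {SB : HHGStruct B}
    {φ : A →* B} (h : HHGHom SA SB φ) : Prop where
  /-- The maps on hyperbolic spaces are uniform quasi-isometries (coarsely onto). -/
  coarse_onto : ∃ ξ ≥ (0:ℝ), ∀ U c, ∃ x, mdist (SB.hhs.met (h.fS U)) c (h.fC U x) ≤ ξ
  /-- Domains nested in an image domain are images of nested domains. -/
  nest_lift : ∀ U V', SB.hhs.nest V' (h.fS U) → ∃ V, SA.hhs.nest V U ∧ h.fS V = V'

/-- A family of subgroups of an HHG is hierarchically hyperbolically embedded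
(Behrstock--Hagen--Sisto): `C S = Cay(Q, T)` with `π_S` the inclusion, `T ∩ Hᵢ`
generates `Hᵢ`, and the family is hyperbolically embedded in `(Q, T)`. -/
structure HHEmbedded {Q : Type*} [Group Q] (G : HHGStruct Q) {I : Type*}
    (H : I → Subgroup Q) (T : Set Q) : Prop where
  maxCay : ∀ x y : Q,
    mdist (G.hhs.met G.hhs.maxS) (G.hhs.π G.hhs.maxS x) (G.hhs.π G.hhs.maxS y) = wdist T x y
  maxBij : Function.Bijective (G.hhs.π G.hhs.maxS)
  genT : Generates T
  genHi : ∀ i, ∀ h ∈ H i, (relWords (T ∩ (H i : Set Q)) h).Nonempty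
  hypEmb : HypEmbFamily Q H T

/-! ### Helper lemmas -/

lemma aux_growth (A B c δ : ℝ) (hA : 0 ≤ A) (hδ : 0 < δ) :
    ∃ D0 : ℝ, 0 ≤ D0 ∧ ∀ D : ℝ, (∀ k : ℕ, A * D + B ≤ 2 ^ k → D ≤ c + δ * k) → D ≤ D0 := by
  have h1 : ∃ k0 : ℕ, ∀ k ≥ k0, A * (c + δ * ((k:ℝ) + 1)) + B ≤ 2 ^ k := by
    have t1 : Filter.Tendsto (fun k : ℕ => (k:ℝ) ^ 1 / (2:ℝ) ^ k) Filter.atTop (nhds 0) :=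
      tendsto_pow_const_div_const_pow_of_one_lt 1 (by norm_num)
    have t0 : Filter.Tendsto (fun k : ℕ => (k:ℝ) ^ 0 / (2:ℝ) ^ k) Filter.atTop (nhds 0) :=
      tendsto_pow_const_div_const_pow_of_one_lt 0 (by norm_num)
    have t2 := (t1.const_mul (A * δ)).add (t0.const_mul (A * c + A * δ + B))
    simp only [mul_zero, add_zero] at t2
    have t3 := t2.eventually (gt_mem_nhds (zero_lt_one))
    obtain ⟨k0, hk0⟩ := Filter.eventually_atTop.1 t3
    refine ⟨k0, fun k hk => ?_⟩
    have h := hk0 k hk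
    have hp : (0:ℝ) < 2 ^ k := by positivity
    have e : A * δ * ((k:ℝ) ^ 1 / 2 ^ k) + (A * c + A * δ + B) * ((k:ℝ) ^ 0 / 2 ^ k)
        = (A * (c + δ * ((k:ℝ) + 1)) + B) / 2 ^ k := by
      field_simp
      ring
    rw [e, div_lt_one hp] at h
    exact h.le
  obtain ⟨k0, hk0⟩ := h1
  refine ⟨max 0 (c + δ * k0), le_max_left _ _, fun D hD => ?_⟩
  by_contra hcon
  have hcon' : c + δ * k0 < D := lt_of_le_of_lt (le_max_right _ _) (not_le.1 hcon)
  have key : ∀ m : ℕ, c + δ * ((k0 + m : ℕ) : ℝ) < D := by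
    intro m
    induction m with
    | zero => simpa using hcon'
    | succ m ih =>
      by_contra h
      have h' := not_lt.1 h
      have h2 := hk0 (k0 + m) (Nat.le_add_right _ _)
      have h3 : A * D ≤ A * (c + δ * (((k0 + m : ℕ) : ℝ) + 1)) := by
        apply mul_le_mul_of_nonneg_left _ hA
        push_cast at h' ⊢
        linarith
      have h4 := hD (k0 + m) (by linarith)
      linarith
  obtain ⟨m, hm⟩ := exists_nat_gt ((D - c) / δ)
  rw [div_lt_iff₀ hδ] at hm
  have := key m
  push_cast at this
  have : 0 ≤ δ * (k0:ℝ) := by positivity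
  nlinarith

lemma aux_prod {α : Type*} [PseudoMetricSpace α] {δ : ℝ}
    (h : IsHypDist (fun x y : α => dist x y) δ) (p x y z : α) (a : ℝ)
    (h1 : a ≤ dist x p + dist z p - dist x z) (h2 : a ≤ dist z p + dist y p - dist z y) :
    a - 2 * δ ≤ dist x p + dist y p - dist x y := by
  have := h x y z p
  simp only at this
  rw [dist_comm z y] at h2
  rcases max_choice (dist x z + dist y p) (dist x p + dist y z) with e | e <;>
    rw [e] at this <;> linarith

lemma aux_chain {α : Type*} [PseudoMetricSpace α] {δ : ℝ} (hδ : 0 ≤ δ)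
    (h : IsHypDist (fun x y : α => dist x y) δ) (p : α) (n : ℕ) (x : ℕ → α) (D c : ℝ)
    (hc : 0 ≤ c) (hD : ∀ l ≤ n, D ≤ dist (x l) p)
    (hs : ∀ l < n, dist (x l) (x (l+1)) ≤ c) (k : ℕ) :
    ∀ i j, i ≤ j → j ≤ n → j - i ≤ 2 ^ k →
      2 * D - c - 2 * δ * k ≤ dist (x i) p + dist (x j) p - dist (x i) (x j) := by
  induction k with
  | zero =>
    intro i j hij hjn hk
    have h1 := hD i (hij.trans hjn)
    have h2 := hD j hjn
    rcases Nat.lt_or_ge i j with hlt | hge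
    · have : j = i + 1 := by simp at hk; omega
      subst this
      have := hs i (by omega)
      simp; linarith
    · have : i = j := by omega
      subst this
      simp; linarith
  | succ k ih =>
    intro i j hij hjn hk
    rw [pow_succ] at hk
    have a1 := ih i (i + (j-i)/2) (by omega) (by omega) (by omega)
    have a2 := ih (i + (j-i)/2) j (by omega) (by omega) (by omega)
    have := aux_prod h p _ _ _ _ a1 a2
    push_cast
    linarith

lemma aux_morse {α : Type*} [PseudoMetricSpace α] {δ : ℝ} (hδ0 : 0 ≤ δ)
    (h0 : IsHypDist (fun x y : α => dist x y) δ) (K : ℝ) (hK : 1 ≤ K) :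
    ∃ D0 : ℝ, 0 ≤ D0 ∧ ∀ (n : ℕ) (x : ℕ → α),
      (∀ i j, i ≤ j → j ≤ n → (j:ℝ) - i ≤ K * dist (x i) (x j) + K ∧
        dist (x i) (x j) ≤ K * ((j:ℝ) - i) + K) →
      ∀ (m : ℕ) (p : ℕ → α), IsGeodChain (fun x y : α => dist x y) m p →
        p 0 = x 0 → p m = x n → ∀ t ≤ m, ∃ l ≤ n, dist (p t) (x l) ≤ D0 := by
  obtain ⟨δ, hδ, h⟩ : ∃ δ : ℝ, 0 < δ ∧ IsHypDist (fun x y : α => dist x y) δ :=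
    ⟨δ + 1, by linarith, fun x y z w => by have := h0 x y z w; linarith⟩
  obtain ⟨D0, hD0, hgr⟩ := aux_growth (6 * K) (3 * K) (K + 2 * δ) δ (by linarith) hδ
  refine ⟨D0, hD0, ?_⟩
  intro n x hx m p hp hp0 hpm
  -- distance to the path
  have hmin : ∀ t : ℕ, ∃ l ∈ Finset.range (n+1), ∀ l' ∈ Finset.range (n+1),
      dist (p t) (x l) ≤ dist (p t) (x l') := fun t =>
    Finset.exists_min_image _ _ ⟨0, by simp⟩
  choose L hL hLm using hmin
  obtain ⟨t, ht, htm⟩ := Finset.exists_max_image (Finset.range (m+1))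
    (fun t => dist (p t) (x (L t))) ⟨0, by simp⟩
  set D := dist (p t) (x (L t)) with hDdef
  have hDn : 0 ≤ D := dist_nonneg
  simp only [Finset.mem_range, Nat.lt_succ_iff] at hL hLm ht htm
  suffices hh : D ≤ D0 from fun s hs => ⟨L s, hL s, (htm s hs).trans hh⟩
  apply hgr
  intro k hk
  have hfar : ∀ l ≤ n, D ≤ dist (x l) (p t) := fun l hl => by
    rw [dist_comm]; exact hLm t l hl
  have hM1 : 2 * D ≤ (⌈2 * D⌉₊ : ℝ) := Nat.le_ceil _
  have hM2 : (⌈2 * D⌉₊ : ℝ) < 2 * D + 1 := Nat.ceil_lt_add_one (by linarith)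
  set M := ⌈2 * D⌉₊ with hM
  -- left point
  have hleft : ∃ s i, s ≤ t ∧ i ≤ n ∧ (t:ℝ) - s ≤ M ∧ dist (p s) (x i) ≤ D ∧
      2 * D ≤ dist (p s) (p t) + dist (x i) (p t) - dist (p s) (x i) := by
    rcases Nat.lt_or_ge t M with hlt | hge
    · refine ⟨0, 0, Nat.zero_le _, Nat.zero_le _, ?_, ?_, ?_⟩
      · have : (t:ℝ) < M := by exact_mod_cast hlt
        simp; linarith
      · rw [hp0]; simpa using hDn
      · rw [hp0]; have := hfar 0 (Nat.zero_le _); simp; linarith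
    · refine ⟨t - M, L (t - M), by omega, hL _, ?_, htm _ (by omega), ?_⟩
      · rw [Nat.cast_sub hge]; linarith
      · have e : dist (p (t - M)) (p t) = _ := hp (t - M) (by omega) t ht
        rw [Nat.cast_sub hge] at e
        have e2 : |(t:ℝ) - M - t| = M := by
          rw [show (t:ℝ) - M - t = -M by ring, abs_neg, abs_of_nonneg (by positivity)]
        have := htm (t - M) (by omega)
        have := hfar (L (t - M)) (hL _)
        linarith
  have hright : ∃ u j, t ≤ u ∧ u ≤ m ∧ j ≤ n ∧ (u:ℝ) - t ≤ M ∧ dist (p u) (x j) ≤ D ∧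
      2 * D ≤ dist (p u) (p t) + dist (x j) (p t) - dist (p u) (x j) := by
    rcases Nat.lt_or_ge m (t + M) with hlt | hge
    · refine ⟨m, n, ht, le_rfl, le_rfl, ?_, ?_, ?_⟩
      · have : (m:ℝ) < t + M := by exact_mod_cast hlt
        linarith
      · rw [hpm]; simpa using hDn
      · rw [hpm]; have := hfar n le_rfl; simp; linarith
    · refine ⟨t + M, L (t + M), by omega, hge, hL _, ?_, htm _ (by omega), ?_⟩
      · push_cast; linarith
      · have e : dist (p (t + M)) (p t) = _ := hp (t + M) (by omega) t ht
        push_cast at e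
        have e2 : |(t:ℝ) + M - t| = M := by
          rw [show (t:ℝ) + M - t = M by ring, abs_of_nonneg (by positivity)]
        have := htm (t + M) (by omega)
        have := hfar (L (t + M)) (hL _)
        linarith
  obtain ⟨s, i, hst, hin, hsM, hsi, hs⟩ := hleft
  obtain ⟨u, j, htu, hum, hjn, huM, huj, hu⟩ := hright
  have hst' : (s:ℝ) ≤ t := by exact_mod_cast hst
  have htu' : (t:ℝ) ≤ u := by exact_mod_cast htu
  have e1 : dist (p s) (p t) = (t:ℝ) - s := by
    have e : dist (p s) (p t) = _ := hp s (by omega) t ht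
    rw [e, abs_sub_comm, abs_of_nonneg (by linarith)]
  have e2 : dist (p u) (p t) = (u:ℝ) - t := by
    have e : dist (p u) (p t) = _ := hp u hum t ht
    rw [e, abs_of_nonneg (by linarith)]
  have e3 : dist (p s) (p u) = (u:ℝ) - s := by
    have e : dist (p s) (p u) = _ := hp s (by omega) u hum
    rw [e, abs_sub_comm, abs_of_nonneg (by linarith)]
  have hij : dist (x i) (x j) ≤ 6 * D + 2 := by
    have a := dist_triangle4 (x i) (p s) (p u) (x j)
    rw [dist_comm (x i) (p s)] at a
    linarith
  have hstep : ∀ l < n, dist (x l) (x (l+1)) ≤ 2 * K := by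
    intro l hl
    have := (hx l (l+1) (by omega) (by omega)).2
    push_cast at this
    nlinarith
  have hch := aux_chain hδ.le h (p t) n x D (2*K) (by linarith) hfar hstep k
  have hlen : K * dist (x i) (x j) + K ≤ 2 ^ k := by
    have : K * dist (x i) (x j) ≤ K * (6 * D + 2) :=
      mul_le_mul_of_nonneg_left hij (by linarith)
    linarith
  have hmid : 2 * D - 2 * K - 2 * δ * k
      ≤ dist (x i) (p t) + dist (x j) (p t) - dist (x i) (x j) := by
    rcases le_total i j with hle | hle
    · apply hch i j hle hjn
      have := (hx i j hle hjn).1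
      have h2 : ((j - i : ℕ) : ℝ) ≤ ((2 ^ k : ℕ) : ℝ) := by
        rw [Nat.cast_sub hle]; push_cast; linarith
      exact_mod_cast h2
    · have := (hx j i hle hin).1
      rw [dist_comm] at this
      have h2 : ((i - j : ℕ) : ℝ) ≤ ((2 ^ k : ℕ) : ℝ) := by
        rw [Nat.cast_sub hle]; push_cast; linarith
      have := hch j i hle hin (by exact_mod_cast h2)
      rw [dist_comm (x j) (x i)] at this
      linarith
  have hk0 : 0 ≤ δ * k := by positivity
  have s1 := aux_prod h (p t) (p s) (x j) (x i) (2 * D - 2 * K - 2 * δ * k)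
    (by linarith) hmid
  have s2 := aux_prod h (p t) (p s) (p u) (x j) (2 * D - 2 * K - 2 * δ * k - 2 * δ)
    s1 (by rw [dist_comm (x j) (p u)]; linarith)
  rw [e1, e2, e3] at s2
  linarith

lemma wdist_le_word {G : Type*} [Group G] (A : Set G) (x : G) (l : List G)
    (hl : ∀ a ∈ l, a ∈ A ∨ a⁻¹ ∈ A) : wdist A x (x * l.prod) ≤ l.length := by
  unfold wdist
  have : sInf (relWords A (x⁻¹ * (x * l.prod))) ≤ l.length :=
    Nat.sInf_le ⟨l, rfl, hl, by group⟩
  exact_mod_cast this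

lemma wdist_word {G : Type*} [Group G] {A : Set G} (hA : Generates A) (x y : G) :
    ∃ l : List G, (l.length : ℝ) = wdist A x y ∧ (∀ a ∈ l, a ∈ A ∨ a⁻¹ ∈ A) ∧
      x * l.prod = y := by
  obtain ⟨l, h1, h2, h3⟩ := Nat.sInf_mem (hA (x⁻¹ * y))
  exact ⟨l, by unfold wdist; exact_mod_cast h1, h2, by rw [h3]; group⟩

lemma wdist_tri {G : Type*} [Group G] {A : Set G} (hA : Generates A) (x y z : G) :
    wdist A x z ≤ wdist A x y + wdist A y z := by
  obtain ⟨l, h1, h2, h3⟩ := wdist_word hA x y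
  obtain ⟨l', h1', h2', h3'⟩ := wdist_word hA y z
  have := wdist_le_word A x (l ++ l') (by
    intro a ha
    rcases List.mem_append.1 ha with h | h
    · exact h2 a h
    · exact h2' a h)
  rw [List.prod_append, ← mul_assoc, h3, h3', List.length_append] at this
  push_cast at this
  linarith

lemma wdist_geod {G : Type*} [Group G] {A : Set G} (hA : Generates A) (x y : G) :
    ∃ (n : ℕ) (w : ℕ → G), w 0 = x ∧ w n = y ∧
      ∀ i j, i ≤ j → j ≤ n → wdist A (w i) (w j) = (j:ℝ) - i := by
  obtain ⟨l, h1, h2, h3⟩ := wdist_word hA x y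
  have hle : ∀ i j, i ≤ j → j ≤ l.length →
      wdist A (x * (l.take i).prod) (x * (l.take j).prod) ≤ (j:ℝ) - i := by
    intro i j hij hj
    have := wdist_le_word A (x * (l.take i).prod) ((l.take j).drop i) (fun a ha =>
      h2 a (List.mem_of_mem_take (List.mem_of_mem_drop ha)))
    have e : (l.take i).prod * ((l.take j).drop i).prod = (l.take j).prod := by
      have : l.take i = (l.take j).take i := by rw [List.take_take, min_eq_left hij]
      rw [this, List.prod_take_mul_prod_drop]
    rw [mul_assoc, e] at this
    refine this.trans ?_
    rw [List.length_drop, List.length_take, min_eq_left hj, Nat.cast_sub hij]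
  refine ⟨l.length, fun i => x * (l.take i).prod, by simp, by simpa using h3, ?_⟩
  intro i j hij hj
  apply le_antisymm (hle i j hij hj)
  have a1 := hle 0 i (Nat.zero_le _) (hij.trans hj)
  have a2 := hle j l.length hj le_rfl
  have t1 := wdist_tri hA x (x * (l.take i).prod) y
  have t2 := wdist_tri hA (x * (l.take i).prod) (x * (l.take j).prod) y
  simp only [List.take_zero, List.prod_nil, mul_one, List.take_length, h3] at a1 a2
  push_cast at a1
  linarith

lemma wdist_hom {G H : Type*} [Group G] [Group H] {T : Set G} (hT : Generates T)
    (Y : Finset H) (hY : Generates (Y : Set H)) (φ : H →* G) :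
    ∃ L : ℝ, 0 ≤ L ∧ ∀ (g : G) (a b : H),
      wdist T (g * φ a) (g * φ b) ≤ L * wdist (Y : Set H) a b := by
  have hn : ∀ x y : G, 0 ≤ wdist T x y := fun x y => by unfold wdist; positivity
  set L := ∑ y ∈ Y, (wdist T 1 (φ y) + wdist T 1 (φ y⁻¹)) with hL
  have hsum : ∀ y ∈ Y, wdist T 1 (φ y) + wdist T 1 (φ y⁻¹) ≤ L := fun y hy =>
    Finset.single_le_sum (f := fun y => wdist T 1 (φ y) + wdist T 1 (φ y⁻¹))
      (fun z _ => add_nonneg (hn _ _) (hn _ _)) hy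
  have hword : ∀ (l : List H), (∀ a ∈ l, a ∈ (Y : Set H) ∨ a⁻¹ ∈ (Y : Set H)) → ∀ x : G,
      wdist T x (x * φ l.prod) ≤ L * l.length := by
    intro l
    induction l with
    | nil =>
      intro _ x
      have := wdist_le_word T x [] (by simp)
      simpa using this
    | cons a l ih =>
      intro hl x
      have h1 := ih (fun b hb => hl b (List.mem_cons_of_mem _ hb)) (x * φ a)
      have h2 : wdist T x (x * φ a) ≤ L := by
        have e : wdist T x (x * φ a) = wdist T 1 (φ a) := by unfold wdist; simp
        rw [e]
        rcases hl a List.mem_cons_self with h | h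
        · have := hsum a h; have := hn 1 (φ a⁻¹); linarith
        · have := hsum _ h; have := hn 1 (φ a⁻¹); rw [inv_inv] at *; linarith
      have t := wdist_tri hT x (x * φ a) (x * φ (a :: l).prod)
      rw [List.prod_cons, map_mul, ← mul_assoc] at t ⊢
      rw [List.length_cons]; push_cast
      linarith
  refine ⟨L, Finset.sum_nonneg fun z _ => add_nonneg (hn _ _) (hn _ _), fun g a b => ?_⟩
  obtain ⟨l, h1, h2, h3⟩ := wdist_word hY a b
  have := hword l h2 (g * φ a)
  rw [mul_assoc, ← map_mul, h3, h1] at this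
  exact this

/-- Abstract form of the argument: `x` a path in `α` with shadow `u` in `β`. -/
lemma aux_path {α β : Type*} [PseudoMetricSpace α] [PseudoMetricSpace β] (K R B N : ℝ)
    (hK : 1 ≤ K) (hB : 0 ≤ B) (hN : 0 ≤ N) (r : α) (n : ℕ) (x : ℕ → α) (u : ℕ → β)
    (hx : ∀ i j, i ≤ j → j ≤ n → (j:ℝ) - i ≤ K * dist (x i) (x j) + K)
    (hu : ∀ i j, i ≤ j → j ≤ n → dist (u i) (u j) ≤ N * ((j:ℝ) - i) + N)
    (hfar : ∀ i j, i ≤ j → j ≤ n → (∀ l, i ≤ l → l ≤ j → R < dist (x l) r) →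
      dist (u i) (u j) ≤ B) :
    dist (u 0) (u n) ≤ 2 * B + 5 * N + N * (K * (2 * |R|) + K) := by
  have hNK : 0 ≤ N * (K * (2 * |R|) + K) := by positivity
  by_cases hex : ∃ l, l ≤ n ∧ dist (x l) r ≤ R
  · have hi := Nat.find_spec hex
    have hmin : ∀ l, l < Nat.find hex → ¬ (l ≤ n ∧ dist (x l) r ≤ R) :=
      fun l hl => Nat.find_min hex hl
    set i := Nat.find hex
    obtain ⟨j, hj, hjm⟩ := Finset.exists_max_image
      ((Finset.range (n+1)).filter (fun l => dist (x l) r ≤ R)) id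
      ⟨i, by simpa [Nat.lt_succ_iff] using hi⟩
    simp only [Finset.mem_filter, Finset.mem_range, Nat.lt_succ_iff, id] at hj hjm
    have hij : i ≤ j := hjm i hi
    have b1 : dist (u 0) (u i) ≤ B + 2 * N := by
      rcases Nat.eq_zero_or_pos i with h0 | h0
      · rw [h0, dist_self]; linarith
      · have f := hfar 0 (i-1) (Nat.zero_le _) (by omega) (fun l _ hl => by
          by_contra hc; exact hmin l (by omega) ⟨by omega, not_lt.1 hc⟩)
        have s := hu (i-1) i (by omega) hi.1
        rw [Nat.cast_sub h0] at s
        push_cast at s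
        have := dist_triangle (u 0) (u (i-1)) (u i)
        linarith
    have b3 : dist (u j) (u n) ≤ B + 2 * N := by
      rcases Nat.eq_or_lt_of_le hj.1 with h0 | h0
      · rw [h0, dist_self]; linarith
      · have f := hfar (j+1) n (by omega) le_rfl (fun l h1 hl => by
          by_contra hc; have := hjm l ⟨hl, not_lt.1 hc⟩; omega)
        have s := hu j (j+1) (by omega) (by omega)
        push_cast at s
        have := dist_triangle (u j) (u (j+1)) (u n)
        linarith
    have b2 : dist (u i) (u j) ≤ N * (K * (2 * |R|) + K) + N := by
      have h1 := hu i j hij hj.1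
      have h2 := hx i j hij hj.1
      have h3 : dist (x i) (x j) ≤ 2 * |R| := by
        have := dist_triangle_right (x i) (x j) r
        have := le_abs_self R
        linarith [hi.2, hj.2]
      have h4 : (j:ℝ) - i ≤ K * (2 * |R|) + K := by
        have := mul_le_mul_of_nonneg_left h3 (by linarith : 0 ≤ K)
        linarith
      have := mul_le_mul_of_nonneg_left h4 hN
      linarith
    have := dist_triangle4 (u 0) (u i) (u j) (u n)
    linarith
  · push Not at hex
    have := hfar 0 n (Nat.zero_le _) le_rfl (fun l _ hl => hex l hl)
    linarith

/-- Lemma `lem: The element of H projects uniformly on the U`.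
Let `(Q, 𝔖)` be an HHG with maximal element `S` such that `C S = Cay(Q, X)` with `π_S`
the inclusion.  If `H` is a finitely generated group and `φ : H → Q` is a group
homomorphism which is a quasi-isometric embedding for the word metrics `d_Y` and `d_X`,
then there is a constant `C` such that for every `g ∈ Q` and every non-maximal domain
`U`, the projection of the coset `g·φ(H)` to `C U` has diameter at most `C`. -/
theorem coset_projections_uniformly_bounded
    {Q : Type} [Group Q] (G : HHGStruct Q) (X : Set Q)
    (hgenX : Generates X)
    (hcay : ∀ x y : Q, mdist (G.hhs.met G.hhs.maxS)
      (G.hhs.π G.hhs.maxS x) (G.hhs.π G.hhs.maxS y) = wdist X x y)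
    (hbij : Function.Bijective (G.hhs.π G.hhs.maxS))
    {H : Type} [Group H] (Y : Finset H) (hgenY : Generates (Y : Set H))
    (φ : H →* Q)
    (hqie : ∃ K ≥ (1:ℝ), ∀ a b : H,
      wdist (Y : Set H) a b ≤ K * wdist X (φ a) (φ b) + K ∧
      wdist X (φ a) (φ b) ≤ K * wdist (Y : Set H) a b + K) :
    ∃ C ≥ (0:ℝ), ∀ (g : Q) (U : G.hhs.S), U ≠ G.hhs.maxS →
      ∀ a b : H, mdist (G.hhs.met U) (G.hhs.π U (g * φ a)) (G.hhs.π U (g * φ b)) ≤ C := by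
  obtain ⟨K, hK, hqie⟩ := hqie
  obtain ⟨δ, hδ, hhyp⟩ := G.hhs.hyperbolic
  obtain ⟨κ, hκ, -, hcons, -⟩ := G.hhs.consistency
  obtain ⟨E, hE, hbgi⟩ := G.hhs.bgi
  obtain ⟨P, hP, hlip⟩ := G.hhs.proj_lip
  obtain ⟨T, hT, hword⟩ := G.word
  obtain ⟨L, hL, hhom⟩ := wdist_hom hT Y hgenY φ
  letI mS : PseudoMetricSpace (G.hhs.C G.hhs.maxS) := G.hhs.met G.hhs.maxS
  have hcay' : ∀ x y : Q, dist (G.hhs.π G.hhs.maxS x) (G.hhs.π G.hhs.maxS y) = wdist X x y := hcay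
  obtain ⟨D, hD, hmorse⟩ := aux_morse hδ (hhyp G.hhs.maxS) K hK
  set N := P * L + P with hN
  have hN0 : 0 ≤ N := by positivity
  refine ⟨2 * (E + 2 * κ) + 5 * N + N * (K * (2 * |κ + E + D|) + K), by positivity, ?_⟩
  intro g U hU a b
  letI mU : PseudoMetricSpace (G.hhs.C U) := G.hhs.met U
  obtain ⟨n, w, hw0, hwn, hw⟩ := wdist_geod hgenY a b
  have hinv : ∀ x y : Q, wdist X (g * x) (g * y) = wdist X x y := by
    intro x y; unfold wdist; congr 3; group
  have hx : ∀ i j, i ≤ j → j ≤ n →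
      (j:ℝ) - i ≤ K * dist (G.hhs.π G.hhs.maxS (g * φ (w i))) (G.hhs.π G.hhs.maxS (g * φ (w j))) + K ∧
      dist (G.hhs.π G.hhs.maxS (g * φ (w i))) (G.hhs.π G.hhs.maxS (g * φ (w j)))
        ≤ K * ((j:ℝ) - i) + K := by
    intro i j hij hj
    rw [hcay', hinv, ← hw i j hij hj]
    exact hqie _ _
  have key := aux_path K (κ + E + D) (E + 2 * κ) N hK (by positivity) hN0
    (G.hhs.ρ U G.hhs.maxS) n (fun i => G.hhs.π G.hhs.maxS (g * φ (w i)))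
    (fun i => G.hhs.π U (g * φ (w i))) (fun i j h1 h2 => (hx i j h1 h2).1) ?_ ?_
  · simp only [hw0, hwn] at key
    exact key
  · intro i j hij hj
    have h1 : dist (G.hhs.π U (g * φ (w i))) (G.hhs.π U (g * φ (w j))) ≤ _ := hlip U _ _
    rw [hword] at h1
    have h2 := hhom g (w i) (w j)
    rw [hw i j hij hj] at h2
    have h3 := mul_le_mul_of_nonneg_left h2 hP
    have hij' : (0:ℝ) ≤ j - i := by
      have : (i:ℝ) ≤ j := by exact_mod_cast hij
      linarith
    have h4 : 0 ≤ P * ((j:ℝ) - i) := mul_nonneg hP hij'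
    have h5 : 0 ≤ P * L := by positivity
    rw [hN]
    linarith
  · intro i j hij hj hfar
    obtain ⟨m, v, hv0, hvm, hv⟩ := wdist_geod hgenX (g * φ (w i)) (g * φ (w j))
    have hgeo : IsGeodChain (fun x y : G.hhs.C G.hhs.maxS => dist x y) m
        (fun t => G.hhs.π G.hhs.maxS (v t)) := by
      intro s hs t ht
      simp only
      rcases le_total s t with h | h
      · have h' : (s:ℝ) ≤ t := by exact_mod_cast h
        rw [hcay', hv s t h ht, abs_sub_comm, abs_of_nonneg (by linarith)]
      · have h' : (t:ℝ) ≤ s := by exact_mod_cast h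
        rw [dist_comm, hcay', hv t s h hs, abs_of_nonneg (by linarith)]
    have hproj : ∀ l, i ≤ l → l ≤ j →
        dist (G.hhs.π U (g * φ (w l)))
          (G.hhs.ρdown G.hhs.maxS U (G.hhs.π G.hhs.maxS (g * φ (w l)))) ≤ κ := by
      intro l h1 h2
      have h3 := hfar l h1 h2
      rcases min_le_iff.1 (hcons G.hhs.maxS U (g * φ (w l)) (G.hhs.nest_max U) hU) with h | h
      · have h' : dist (G.hhs.π G.hhs.maxS (g * φ (w l))) (G.hhs.ρ U G.hhs.maxS) ≤ κ := h
        linarith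
      · exact h
    rcases hbgi G.hhs.maxS U (G.hhs.nest_max U) hU m _ hgeo with h | ⟨t, ht, h⟩
    · have h1 : dist (G.hhs.ρdown G.hhs.maxS U (G.hhs.π G.hhs.maxS (v 0)))
          (G.hhs.ρdown G.hhs.maxS U (G.hhs.π G.hhs.maxS (v m))) ≤ E :=
        h 0 (Nat.zero_le _) m le_rfl
      rw [hv0, hvm] at h1
      have h2 := hproj i le_rfl hij
      have h3 := hproj j hij le_rfl
      have h4 := dist_triangle4 (G.hhs.π U (g * φ (w i)))
        (G.hhs.ρdown G.hhs.maxS U (G.hhs.π G.hhs.maxS (g * φ (w i))))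
        (G.hhs.ρdown G.hhs.maxS U (G.hhs.π G.hhs.maxS (g * φ (w j))))
        (G.hhs.π U (g * φ (w j)))
      rw [dist_comm (G.hhs.ρdown G.hhs.maxS U (G.hhs.π G.hhs.maxS (g * φ (w j))))] at h4
      linarith
    · exfalso
      have h' : dist (G.hhs.π G.hhs.maxS (v t)) (G.hhs.ρ U G.hhs.maxS) ≤ E := h
      obtain ⟨l, hl, hdl⟩ := hmorse (j - i)
        (fun k => G.hhs.π G.hhs.maxS (g * φ (w (i + k)))) (by
          intro a b hab hb
          have := hx (i + a) (i + b) (by omega) (by omega)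
          push_cast at this
          rwa [add_sub_add_left_eq_sub] at this)
        m _ hgeo (by simp [hv0]) (by simp only [hvm]; rw [Nat.add_sub_cancel' hij]) t ht
      have h3 := hfar (i + l) (by omega) (by omega)
      have h4 := dist_triangle_left (G.hhs.π G.hhs.maxS (g * φ (w (i + l))))
        (G.hhs.ρ U G.hhs.maxS) (G.hhs.π G.hhs.maxS (v t))
      linarith
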